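/- Let 𝔽_r ⊆ 𝔽_l be finite fields with l = r^h, and let C ⊆ 𝔽_l^n be an 𝔽_l-linear code. Then (C|𝔽_r)^⊥ = Tr(C^⊥), where C|𝔽_r = C ∩ 𝔽_r^n is the subfield subcode, Tr(C^⊥) is the coordinatewise image of the dual code C^⊥ under the trace map Tr: 𝔽_l → 𝔽_r, and the duals on the left and right are taken with respect to the standard bilinear forms on 𝔽_r^n and 𝔽_l^n respectively (Delsarte's theorem). -/

import Mathlib

/-- The dual of a code in F^ι with respect to the standard bilinear form
⟨u,v⟩ = Σ_i u_i v_i. -/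
def dualCode {F : Type*} [Field F] {ι : Type*} [Fintype ι]
    (C : Submodule F (ι → F)) : Submodule F (ι → F) where
  carrier := {c | ∀ u ∈ C, ∑ i, u i * c i = 0}
  zero_mem' := by simp
  add_mem' := by
    intro a b ha hb u hu
    have := ha u hu
    have := hb u hu
    simp only [Pi.add_apply, mul_add, Finset.sum_add_distrib, *]
    simp
  smul_mem' := by
    intro c a ha u hu
    have h := ha u hu
    simp only [Pi.smul_apply, smul_eq_mul, mul_left_comm, ← Finset.mul_sum, h, mul_zero]

/-- The trace map Tr : 𝔽_{r^h} → 𝔽_r, x ↦ x + x^r + ⋯ + x^{r^{h-1}}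
(with values regarded in the big field). -/
def trFun (L : Type*) [Field L] (r h : ℕ) (x : L) : L :=
  ∑ k ∈ Finset.range h, x ^ r ^ k

/-- The subfield subcode C|𝔽_r = C ∩ 𝔽_r^n, as an 𝔽_r-subspace, where 𝔽_r is
identified with the image of K inside L. -/
def subfieldSubcode (K : Type*) {L : Type*} [Field K] [Field L] [Algebra K L]
    {ι : Type*} (C : Submodule L (ι → L)) : Submodule K (ι → L) :=
  C.restrictScalars K ⊓
    Submodule.pi Set.univ fun _ => Subalgebra.toSubmodule (⊥ : Subalgebra K L)

/-! The inclusion `K^ι → L^ι` and the trace `L^ι → K^ι` are adjoint for the standard bilinear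
forms: `Tr ⟨w, u⟩ = ⟨w, Tr u⟩` for `w ∈ K^ι`. The trace form of a finite separable extension is
nondegenerate, so `Tr` cannot vanish on a nonzero `L`-subspace of `L`, and adjointness gives
`(Tr D)^⊥ = D^⊥|K` for every code `D` over `L`. Taking `D = C^⊥` and dualizing over `K` yields
`Tr (C^⊥) = (C|K)^⊥`. -/

section Duality

theorem dotProductBilin_nondegenerate {R ι : Type*} [CommSemiring R] [Fintype ι] :
    LinearMap.BilinForm.Nondegenerate (dotProductBilin R R : LinearMap.BilinForm R (ι → R)) :=
  ⟨fun v hv => dotProduct_eq_zero v hv,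
    fun v hv => dotProduct_eq_zero v fun w => (dotProduct_comm v w).trans (hv w)⟩

variable {F ι : Type*} [Field F] [Fintype ι]

theorem mem_dualCode {C : Submodule F (ι → F)} {c : ι → F} :
    c ∈ dualCode C ↔ ∀ u ∈ C, u ⬝ᵥ c = 0 :=
  Iff.rfl

theorem dualCode_eq_orthogonal (C : Submodule F (ι → F)) :
    dualCode C = LinearMap.BilinForm.orthogonal (dotProductBilin F F) C :=
  rfl

theorem dualCode_dualCode (C : Submodule F (ι → F)) : dualCode (dualCode C) = C := by
  simp only [dualCode_eq_orthogonal]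
  exact LinearMap.BilinForm.orthogonal_orthogonal dotProductBilin_nondegenerate
    (fun u v huv => (dotProduct_comm v u).trans huv) C

end Duality

section Trace

theorem eq_zero_of_forall_trace_eq_zero (K : Type*) {L M : Type*} [Field K] [Field L] [Algebra K L]
    [FiniteDimensional K L] [Algebra.IsSeparable K L] [AddCommGroup M] [Module L M]
    (f : M →ₗ[L] L) {W : Submodule L M} (hW : ∀ u ∈ W, Algebra.trace K L (f u) = 0) :
    ∀ u ∈ W, f u = 0 := by
  intro u hu
  refine (traceForm_nondegenerate K L).2 (f u) fun a => ?_
  have hau : Algebra.trace K L (f (a • u)) = 0 := hW _ (W.smul_mem a hu)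
  rwa [map_smul, smul_eq_mul] at hau

theorem trace_algebraMap_comp_dotProduct {K L ι : Type*} [CommRing K] [CommRing L] [Algebra K L]
    [Fintype ι] (w : ι → K) (u : ι → L) :
    Algebra.trace K L ((algebraMap K L ∘ w) ⬝ᵥ u) = w ⬝ᵥ (Algebra.trace K L ∘ u) := by
  simp only [dotProduct, Function.comp_apply, map_sum, ← Algebra.smul_def, map_smul, smul_eq_mul]

theorem finrank_eq_of_card_eq_pow {K V : Type*} [Field K] [Finite K] [AddCommGroup V] [Module K V]
    {h : ℕ} (hV : Nat.card V = Nat.card K ^ h) : Module.finrank K V = h := by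
  have : Finite V := Nat.finite_of_card_ne_zero (hV ▸ pow_ne_zero h Nat.card_pos.ne')
  exact Nat.pow_right_injective Finite.one_lt_card <|
    (Module.natCard_eq_pow_finrank (K := K)).symm.trans hV

theorem trFun_eq_algebraMap_trace {K L : Type*} [Field K] [Field L] [Finite L] [Algebra K L]
    {h : ℕ} (hL : Nat.card L = Nat.card K ^ h) (x : L) :
    trFun L (Nat.card K) h x = algebraMap K L (Algebra.trace K L x) := by
  have : Finite K := Finite.of_injective _ (algebraMap K L).injective
  rw [FiniteField.algebraMap_trace_eq_sum_pow, finrank_eq_of_card_eq_pow hL, trFun]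

end Trace

section SubfieldSubcode

theorem exists_comp_eq_iff_forall_mem_range {ι α β : Type*} {f : α → β} {c : ι → β} :
    (∃ w : ι → α, f ∘ w = c) ↔ ∀ i, c i ∈ Set.range f := by
  simp only [Set.mem_range, Classical.skolem, funext_iff, Function.comp_apply]

variable (K : Type*) {L ι : Type*} [Field K] [Field L] [Algebra K L]

/-- The subfield subcode `C|K` as a code in `K^ι`; in contrast, `subfieldSubcode K C` is its image
in `L^ι`. -/
def descendedSubcode (C : Submodule L (ι → L)) : Submodule K (ι → K) :=
  (C.restrictScalars K).comap ((Algebra.linearMap K L).compLeft ι)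

/-- The trace code `Tr C`, as a code in `K^ι`, for Mathlib's trace of the extension `L / K`. -/
noncomputable def traceCode (C : Submodule L (ι → L)) : Submodule K (ι → K) :=
  (C.restrictScalars K).map ((Algebra.trace K L).compLeft ι)

variable {K}

theorem mem_descendedSubcode {C : Submodule L (ι → L)} {w : ι → K} :
    w ∈ descendedSubcode K C ↔ algebraMap K L ∘ w ∈ C :=
  Iff.rfl

theorem mem_subfieldSubcode {C : Submodule L (ι → L)} {u : ι → L} :
    u ∈ subfieldSubcode K C ↔ u ∈ C ∧ ∀ i, u i ∈ Set.range (algebraMap K L) := by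
  simp [subfieldSubcode, Algebra.mem_bot]

theorem subfieldSubcode_eq_image (C : Submodule L (ι → L)) :
    (subfieldSubcode K C : Set (ι → L)) = (algebraMap K L ∘ ·) '' descendedSubcode K C := by
  ext u
  rw [SetLike.mem_coe, mem_subfieldSubcode, ← exists_comp_eq_iff_forall_mem_range]
  constructor
  · rintro ⟨hC, w, rfl⟩
    exact ⟨w, hC, rfl⟩
  · rintro ⟨w, hw, rfl⟩
    exact ⟨hw, w, rfl⟩

variable [Fintype ι]

theorem algebraMap_comp_dotProduct_eq_zero {v w : ι → K} :
    (algebraMap K L ∘ v) ⬝ᵥ (algebraMap K L ∘ w) = 0 ↔ v ⬝ᵥ w = 0 := by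
  rw [← RingHom.map_dotProduct, map_eq_zero]

theorem setOf_orthogonal_subfieldSubcode_eq_image (C : Submodule L (ι → L)) :
    {c : ι → L | (∀ i, c i ∈ Set.range (algebraMap K L)) ∧
        ∀ u, u ∈ subfieldSubcode K C → ∑ i, u i * c i = 0} =
      (algebraMap K L ∘ ·) '' (dualCode (descendedSubcode K C) : Set (ι → K)) := by
  have orthogonal_iff (w : ι → K) :
      (∀ u ∈ subfieldSubcode K C, u ⬝ᵥ (algebraMap K L ∘ w) = 0) ↔
        w ∈ dualCode (descendedSubcode K C) := by
    simp only [← SetLike.mem_coe (p := subfieldSubcode K C), subfieldSubcode_eq_image,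
      Set.forall_mem_image, algebraMap_comp_dotProduct_eq_zero, mem_dualCode, SetLike.mem_coe]
  ext c
  rw [Set.mem_ofPred_eq, ← exists_comp_eq_iff_forall_mem_range]
  constructor
  · rintro ⟨⟨w, rfl⟩, hw⟩
    exact ⟨w, (orthogonal_iff w).1 hw, rfl⟩
  · rintro ⟨w, hw, rfl⟩
    exact ⟨⟨w, rfl⟩, (orthogonal_iff w).2 hw⟩

variable [FiniteDimensional K L] [Algebra.IsSeparable K L]

theorem dualCode_traceCode (C : Submodule L (ι → L)) :
    dualCode (traceCode K C) = descendedSubcode K (dualCode C) := by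
  ext w
  calc
    w ∈ dualCode (traceCode K C)
      ↔ ∀ u ∈ C, (Algebra.trace K L ∘ u) ⬝ᵥ w = 0 := Set.forall_mem_image
    _ ↔ ∀ u ∈ C, Algebra.trace K L ((algebraMap K L ∘ w) ⬝ᵥ u) = 0 := by
      simp only [trace_algebraMap_comp_dotProduct, dotProduct_comm w]
    _ ↔ ∀ u ∈ C, (algebraMap K L ∘ w) ⬝ᵥ u = 0 :=
      ⟨eq_zero_of_forall_trace_eq_zero K (dotProductBilin L L (algebraMap K L ∘ w)),
        fun hw u hu => by rw [hw u hu, map_zero]⟩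
    _ ↔ w ∈ descendedSubcode K (dualCode C) := by
      simp only [mem_descendedSubcode, mem_dualCode, dotProduct_comm (algebraMap K L ∘ w)]

theorem dualCode_descendedSubcode (C : Submodule L (ι → L)) :
    dualCode (descendedSubcode K C) = traceCode K (dualCode C) := by
  rw [← dualCode_dualCode (traceCode K (dualCode C)), dualCode_traceCode, dualCode_dualCode]

theorem delsarte_dual_subfieldSubcode_general (C : Submodule L (ι → L)) :
    {c : ι → L | (∀ i, c i ∈ Set.range (algebraMap K L)) ∧
        ∀ u, u ∈ subfieldSubcode K C → ∑ i, u i * c i = 0} =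
      (fun u => fun i => algebraMap K L (Algebra.trace K L (u i))) ''
        (dualCode C : Set (ι → L)) := by
  rw [setOf_orthogonal_subfieldSubcode_eq_image, dualCode_descendedSubcode]
  exact Set.image_image _ _ _

end SubfieldSubcode

/-- Delsarte: (C|𝔽_r)^⊥ = Tr(C^⊥).  The left-hand side is the set of
vectors with coordinates in 𝔽_r orthogonal to every codeword of C with coordinates in
𝔽_r; the right-hand side is the coordinatewise trace image of the dual code C^⊥. -/
theorem delsarte_dual_subfieldSubcode (r h n : ℕ) (hh : 0 < h)
    (K L : Type*) [Field K] [Fintype K] [Field L] [Fintype L] [Algebra K L]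
    (hcK : Fintype.card K = r) (hcL : Fintype.card L = r ^ h)
    (C : Submodule L (Fin n → L)) :
    {c : Fin n → L | (∀ i, c i ∈ Set.range (algebraMap K L)) ∧
        ∀ u, u ∈ subfieldSubcode K C → ∑ i, u i * c i = 0} =
      (fun u => fun i => trFun L r h (u i)) '' (dualCode C : Set (Fin n → L)) := by
  rw [← hcK, ← Nat.card_eq_fintype_card, ← Nat.card_eq_fintype_card] at hcL
  simp only [← hcK, ← Nat.card_eq_fintype_card, trFun_eq_algebraMap_trace hcL,
    delsarte_dual_subfieldSubcode_general]
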